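/- For the square lattice with free boundary conditions in both diagonal directions, the zero-energy ground state is at most unique: for all integers a, b ≥ 1, the hard-core fermion model on the graph with vertex set {(x,y) ∈ ℤ² : 0 ≤ x+y ≤ a−1 and 0 ≤ x−y ≤ b−1} and edges between points at Euclidean distance 1 satisfies dim ker H ≤ 1. -/

import Mathlib

/-! ### The supersymmetric hard-core fermion model on a graph

For a finite simple graph `G` with totally ordered vertex set, the Hilbert space has an
orthonormal basis `{|I⟩ : I an independent set of G}`, the supercharge acts by
`Q|I⟩ = Σ_v ε(v,I) |I ∪ {v}⟩` (sum over `v ∉ I` with `I ∪ {v}` independent,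
`ε(v,I) = (−1)^{#{w ∈ I : w < v}}`), and the Hamiltonian is `H = Q Q† + Q† Q`. -/

open scoped BigOperators

/-- A finite set of vertices is independent if it contains no edge of `G`. -/
def Indep {V : Type*} (G : SimpleGraph V) (I : Finset V) : Prop :=
  ∀ ⦃a⦄, a ∈ I → ∀ ⦃b⦄, b ∈ I → ¬ G.Adj a b

lemma Indep.mono {V : Type*} {G : SimpleGraph V} {I J : Finset V}
    (hI : Indep G I) (hJI : J ⊆ I) : Indep G J :=
  fun _ ha _ hb => hI (hJI ha) (hJI hb)

/-- The independent sets of `G`, indexing the orthonormal basis of the Hilbert space. -/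
def IndepSet {V : Type*} (G : SimpleGraph V) : Type _ := {I : Finset V // Indep G I}

noncomputable instance {V : Type*} [Fintype V] [LinearOrder V] (G : SimpleGraph V) :
    Fintype (IndepSet G) := by
  classical exact Subtype.fintype _

instance {V : Type*} [LinearOrder V] (G : SimpleGraph V) : DecidableEq (IndepSet G) := by
  unfold IndepSet; infer_instance

/-- The Hilbert space `ℋ_G` of the hard-core fermion model: one orthonormal basis state
`|I⟩` for every independent set `I` of `G`. -/
noncomputable abbrev FockSpace {V : Type*} [Fintype V] [LinearOrder V] (G : SimpleGraph V) :=
  EuclideanSpace ℂ (IndepSet G)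

/-- The fermionic sign `ε(v, I) = (−1)^{#{w ∈ I : w < v}}`. -/
def fsign {V : Type*} [LinearOrder V] (I : Finset V) (v : V) : ℂ :=
  (-1) ^ (I.filter (· < v)).card

/-- The supercharge `Q`, with `Q|I⟩ = Σ_v ε(v,I) |I ∪ {v}⟩` over vertices `v ∉ I` such that
`I ∪ {v}` is independent; equivalently `(Qψ)(J) = Σ_{v ∈ J} ε(v, J∖{v}) ψ(J∖{v})`. -/
noncomputable def supercharge {V : Type*} [Fintype V] [LinearOrder V] (G : SimpleGraph V) :
    FockSpace G →ₗ[ℂ] FockSpace G where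
  toFun ψ := WithLp.toLp 2 fun J => ∑ v ∈ J.1, fsign (J.1.erase v) v *
      ψ ⟨J.1.erase v, J.2.mono (Finset.erase_subset v J.1)⟩
  map_add' ψ φ := by
    ext J
    simp only [PiLp.add_apply, ← Finset.sum_add_distrib, ← mul_add]
    rfl
  map_smul' c ψ := by
    ext J
    simp [Finset.mul_sum]
    exact Finset.sum_congr rfl fun v _ => (mul_left_comm c _ _).symm

/-- The Hamiltonian `H = Q Q† + Q† Q` of the supersymmetric hard-core fermion model. -/
noncomputable def hamiltonian {V : Type*} [Fintype V] [LinearOrder V] (G : SimpleGraph V) :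
    FockSpace G →ₗ[ℂ] FockSpace G :=
  supercharge G ∘ₗ LinearMap.adjoint (supercharge G)
    + LinearMap.adjoint (supercharge G) ∘ₗ supercharge G

/-- The fermion-number operator `F`, with `F|I⟩ = |I| · |I⟩`. -/
noncomputable def numberOp {V : Type*} [Fintype V] [LinearOrder V] (G : SimpleGraph V) :
    FockSpace G →ₗ[ℂ] FockSpace G where
  toFun ψ := WithLp.toLp 2 fun I => (I.1.card : ℂ) * ψ I
  map_add' ψ φ := by ext I; simp [mul_add]
  map_smul' c ψ := by ext I; simp [mul_left_comm]

/-- The bosonic subspace: the span of the basis states `|I⟩` with `|I|` even. -/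
noncomputable def bosonic {V : Type*} [Fintype V] [LinearOrder V] (G : SimpleGraph V) :
    Submodule ℂ (FockSpace G) :=
  Submodule.span ℂ
    {e : FockSpace G | ∃ I : IndepSet G, Even I.1.card ∧ e = EuclideanSpace.single I 1}

/-- The fermionic subspace: the span of the basis states `|I⟩` with `|I|` odd. -/
noncomputable def fermionic {V : Type*} [Fintype V] [LinearOrder V] (G : SimpleGraph V) :
    Submodule ℂ (FockSpace G) :=
  Submodule.span ℂ
    {e : FockSpace G | ∃ I : IndepSet G, Odd I.1.card ∧ e = EuclideanSpace.single I 1}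

/-! ### A finite square-lattice region with free boundary conditions in both
diagonal directions -/

/-- The diamond-shaped region `{(x,y) ∈ ℤ² : 0 ≤ x+y ≤ a−1, 0 ≤ x−y ≤ b−1}`. -/
abbrev DiamondRegion (a b : ℕ) : Type :=
  {p : ℤ × ℤ // 0 ≤ p.1 + p.2 ∧ p.1 + p.2 ≤ (a : ℤ) - 1 ∧
    0 ≤ p.1 - p.2 ∧ p.1 - p.2 ≤ (b : ℤ) - 1}

/-- The square-lattice graph on the diamond region: edges between points at Euclidean
distance `1`. -/
def diamondGraph (a b : ℕ) : SimpleGraph (DiamondRegion a b) where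
  Adj p q := ((p : ℤ × ℤ).1 - (q : ℤ × ℤ).1) ^ 2 + ((p : ℤ × ℤ).2 - (q : ℤ × ℤ).2) ^ 2 = 1
  symm := by
    constructor
    intro p q h
    linear_combination h
  loopless := by
    constructor
    intro p h
    simp at h

/-! ### Creation and annihilation operators on the full exterior algebra -/

set_option linter.unusedSectionVars false

section HCF

variable {V : Type*} [Fintype V] [LinearOrder V]

lemma fsign_sq (I : Finset V) (v : V) : fsign I v * fsign I v = 1 := by
  unfold fsign
  rw [← mul_pow]; simp

lemma fsign_insert (I : Finset V) {u v : V} (hu : u ∉ I) :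
    fsign (insert u I) v = if u < v then - fsign I v else fsign I v := by
  unfold fsign
  rw [Finset.filter_insert]
  split_ifs with h
  · rw [Finset.card_insert_of_notMem (by simp [hu]), pow_succ]; ring
  · rfl

lemma fsign_swap (K : Finset V) {u v : V} (huv : u ≠ v) (hu : u ∉ K) (hv : v ∉ K) :
    fsign (insert v K) u * fsign (insert u K) v = - (fsign K v * fsign K u) := by
  rw [fsign_insert K hu, fsign_insert K hv]
  rcases lt_or_gt_of_ne huv with h | h
  · simp [h, not_lt_of_gt h]; ring
  · simp [h, not_lt_of_gt h]; ring

lemma fsign_swap2 (K : Finset V) {u v : V} (huv : u ≠ v) (hu : u ∉ K) (hv : v ∉ K) :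
    fsign K u * fsign (insert u K) v = - (fsign K v * fsign (insert v K) u) := by
  rw [fsign_insert K hu, fsign_insert K hv]
  rcases lt_or_gt_of_ne huv with h | h
  · simp [h, not_lt_of_gt h]; ring
  · simp [h, not_lt_of_gt h]; ring

noncomputable def ann (v : V) : (Finset V → ℂ) →ₗ[ℂ] (Finset V → ℂ) where
  toFun ψ := fun I => if v ∈ I then 0 else fsign I v * ψ (insert v I)
  map_add' ψ φ := by ext I; simp only [Pi.add_apply]; split_ifs <;> ring
  map_smul' c ψ := by
    ext I; simp only [Pi.smul_apply, smul_eq_mul, RingHom.id_apply]; split_ifs <;> ring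

noncomputable def cre (v : V) : (Finset V → ℂ) →ₗ[ℂ] (Finset V → ℂ) where
  toFun ψ := fun I => if v ∈ I then fsign (I.erase v) v * ψ (I.erase v) else 0
  map_add' ψ φ := by ext I; simp only [Pi.add_apply]; split_ifs <;> ring
  map_smul' c ψ := by
    ext I; simp only [Pi.smul_apply, smul_eq_mul, RingHom.id_apply]; split_ifs <;> ring

lemma ann_apply (v : V) (ψ : Finset V → ℂ) (I : Finset V) :
    ann v ψ I = if v ∈ I then 0 else fsign I v * ψ (insert v I) := rfl

lemma cre_apply (v : V) (ψ : Finset V → ℂ) (I : Finset V) :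
    cre v ψ I = if v ∈ I then fsign (I.erase v) v * ψ (I.erase v) else 0 := rfl

lemma ann_cre_self_apply (v : V) (ψ : Finset V → ℂ) (I : Finset V) :
    ann v (cre v ψ) I = if v ∈ I then 0 else ψ I := by
  rw [ann_apply]
  split_ifs with h
  · rfl
  · rw [cre_apply, if_pos (Finset.mem_insert_self _ _), Finset.erase_insert h, ← mul_assoc,
      fsign_sq, one_mul]

lemma cre_ann_self_apply (v : V) (ψ : Finset V → ℂ) (I : Finset V) :
    cre v (ann v ψ) I = if v ∈ I then ψ I else 0 := by
  rw [cre_apply]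
  split_ifs with h
  · rw [ann_apply, if_neg (Finset.notMem_erase _ _), Finset.insert_erase h, ← mul_assoc,
      fsign_sq, one_mul]
  · rfl

lemma car_self (v : V) (ψ : Finset V → ℂ) : ann v (cre v ψ) + cre v (ann v ψ) = ψ := by
  ext I
  rw [Pi.add_apply, ann_cre_self_apply, cre_ann_self_apply]
  split_ifs <;> simp

lemma car_ne {u v : V} (huv : u ≠ v) (ψ : Finset V → ℂ) :
    ann u (cre v ψ) + cre v (ann u ψ) = 0 := by
  ext I
  rw [Pi.add_apply, ann_apply, cre_apply, cre_apply, ann_apply]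
  by_cases hv : v ∈ I
  · by_cases hu : u ∈ I
    · simp [hu, hv, huv]
    · obtain ⟨K, hK, rfl⟩ : ∃ K : Finset V, v ∉ K ∧ I = insert v K :=
        ⟨I.erase v, Finset.notMem_erase _ _, (Finset.insert_erase hv).symm⟩
      have huK : u ∉ K := fun h => hu (Finset.mem_insert_of_mem h)
      have e1 : (insert u (insert v K)).erase v = insert u K := by
        rw [Finset.insert_comm, Finset.erase_insert]
        simp [hK, huv.symm]
      rw [if_neg hu, if_pos (by simp), if_pos (by simp), e1, Finset.erase_insert hK, if_neg huK,
        ← mul_assoc, ← mul_assoc, fsign_swap K huv huK hK]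
      simp
  · simp [hv, huv.symm]

lemma ann_anti (u v : V) (ψ : Finset V → ℂ) : ann u (ann v ψ) + ann v (ann u ψ) = 0 := by
  ext I
  rw [Pi.add_apply, ann_apply, ann_apply, ann_apply, ann_apply]
  by_cases huv : u = v
  · subst huv; simp
  by_cases hv : v ∈ I
  · simp [hv]
  by_cases hu : u ∈ I
  · simp [hu]
  rw [if_neg hu, if_neg hv, if_neg (by simp [hv, Ne.symm huv]), if_neg (by simp [hu, huv]),
    Finset.insert_comm v u, ← mul_assoc, ← mul_assoc, fsign_swap2 I huv hu hv]
  simp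

/-- The boundary operator. -/
noncomputable def bd : (Finset V → ℂ) →ₗ[ℂ] (Finset V → ℂ) := ∑ v, ann v

lemma bd_apply (ψ : Finset V → ℂ) : bd ψ = ∑ v, ann v ψ := by
  simp [bd, LinearMap.sum_apply]

lemma bd_cre (v : V) (ψ : Finset V → ℂ) : bd (cre v ψ) + cre v (bd ψ) = ψ := by
  rw [bd_apply, bd_apply, map_sum, ← Finset.sum_add_distrib, Finset.sum_eq_single v]
  · exact car_self v ψ
  · intro u _ h; exact car_ne h ψ
  · simp

lemma bd_ann (v : V) (ψ : Finset V → ℂ) : bd (ann v ψ) + ann v (bd ψ) = 0 := by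
  rw [bd_apply, bd_apply, map_sum, ← Finset.sum_add_distrib]
  exact Finset.sum_eq_zero fun u _ => ann_anti u v ψ

lemma bd_bd (ψ : Finset V → ℂ) : bd (bd ψ) = 0 := by
  have h : bd (bd ψ) + bd (bd ψ) = 0 := by
    have e : bd (bd ψ) = - bd (bd ψ) := by
      conv_lhs => rw [bd_apply ψ, map_sum]
      rw [bd_apply (bd ψ), ← Finset.sum_neg_distrib]
      exact Finset.sum_congr rfl fun v _ => eq_neg_of_add_eq_zero_left (bd_ann v ψ)
    nth_rewrite 1 [e]
    exact neg_add_cancel _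
  have h2 : (2 : ℂ) • bd (bd ψ) = 0 := by rw [two_smul]; exact h
  simpa using h2

/-! ### Chains supported on independent subsets of `S` -/

variable (G : SimpleGraph V)

def chains (S : Set V) : Submodule ℂ (Finset V → ℂ) where
  carrier := {ψ | ∀ I, ψ I ≠ 0 → Indep G I ∧ ∀ x ∈ I, x ∈ S}
  zero_mem' := by intro I h; simp at h
  add_mem' := by
    intro ψ φ h1 h2 I h
    by_cases h3 : ψ I = 0
    · by_cases h4 : φ I = 0
      · simp [h3, h4] at h
      · exact h2 I h4
    · exact h1 I h3
  smul_mem' := by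
    intro c ψ h I hI
    apply h
    intro h0
    simp [h0] at hI

variable {G}

lemma chains_mono {S T : Set V} (h : ∀ x, x ∈ S → x ∈ T) {ψ : Finset V → ℂ}
    (hψ : ψ ∈ chains G S) : ψ ∈ chains G T :=
  fun I hI => ⟨(hψ I hI).1, fun x hx => h x ((hψ I hI).2 x hx)⟩

/-- `S` with the closed neighbourhood of `v` removed. -/
def rest (G : SimpleGraph V) (S : Set V) (v : V) : Set V := {x | x ∈ S ∧ x ≠ v ∧ ¬ G.Adj v x}

lemma ann_mem {S : Set V} {ψ : Finset V → ℂ} (h : ψ ∈ chains G S) (v : V) :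
    ann v ψ ∈ chains G (rest G S v) := by
  intro I hI
  rw [ann_apply] at hI
  by_cases hv : v ∈ I
  · simp [hv] at hI
  rw [if_neg hv] at hI
  obtain ⟨h1, h2⟩ := h _ (right_ne_zero_of_mul hI)
  refine ⟨h1.mono (Finset.subset_insert _ _), fun x hx => ⟨h2 x (Finset.mem_insert_of_mem hx), ?_,
    h1 (Finset.mem_insert_self _ _) (Finset.mem_insert_of_mem hx)⟩⟩
  rintro rfl
  exact hv hx

lemma bd_mem {S : Set V} {ψ : Finset V → ℂ} (h : ψ ∈ chains G S) : bd ψ ∈ chains G S := by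
  rw [bd_apply]
  exact Submodule.sum_mem _ fun v _ => chains_mono (fun x hx => hx.1) (ann_mem h v)

lemma cre_mem {S : Set V} {v : V} (hv : v ∈ S) {ψ : Finset V → ℂ}
    (h : ψ ∈ chains G {x | x ∈ S ∧ ¬ G.Adj v x}) : cre v ψ ∈ chains G S := by
  intro I hI
  rw [cre_apply] at hI
  by_cases hvI : v ∈ I
  · rw [if_pos hvI] at hI
    obtain ⟨h1, h2⟩ := h _ (right_ne_zero_of_mul hI)
    have h3 : ∀ x ∈ I, x ∈ S ∧ ¬ G.Adj v x := by
      intro x hx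
      by_cases hxv : x = v
      · subst hxv; exact ⟨hv, G.irrefl⟩
      · exact h2 x (Finset.mem_erase.2 ⟨hxv, hx⟩)
    refine ⟨?_, fun x hx => (h3 x hx).1⟩
    intro a ha b hb hab
    by_cases hav : a = v
    · subst hav; exact (h3 b hb).2 hab
    by_cases hbv : b = v
    · subst hbv; exact (h3 a ha).2 hab.symm
    exact h1 (Finset.mem_erase.2 ⟨hav, ha⟩) (Finset.mem_erase.2 ⟨hbv, hb⟩) hab
  · simp [hvI] at hI

lemma ann_cre_mem {S : Set V} {v : V} {ψ : Finset V → ℂ}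
    (h : ψ ∈ chains G S) : ann v (cre v ψ) ∈ chains G {x | x ∈ S ∧ x ≠ v} := by
  intro I hI
  rw [ann_cre_self_apply] at hI
  by_cases hv : v ∈ I
  · simp [hv] at hI
  rw [if_neg hv] at hI
  obtain ⟨h1, h2⟩ := h _ hI
  exact ⟨h1, fun x hx => ⟨h2 x hx, fun e => hv (e ▸ hx)⟩⟩

/-- Vanishing homology. -/
def Acyc (G : SimpleGraph V) (S : Set V) : Prop :=
  ∀ ψ ∈ chains G S, bd ψ = 0 → ∃ χ ∈ chains G S, bd χ = ψ

/-- Homology of dimension at most one. -/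
def AtMostOne (G : SimpleGraph V) (S : Set V) : Prop :=
  ∀ ψ ∈ chains G S, ∀ φ ∈ chains G S, bd ψ = 0 → bd φ = 0 →
    ∃ c d : ℂ, (c ≠ 0 ∨ d ≠ 0) ∧ ∃ χ ∈ chains G S, bd χ = c • ψ + d • φ

lemma Acyc.atMostOne {S : Set V} (h : Acyc G S) : AtMostOne G S := by
  intro ψ hψ φ _ h1 _
  obtain ⟨χ, hχ, e⟩ := h ψ hψ h1
  exact ⟨1, 0, by simp, χ, hχ, by simp [e]⟩

lemma acyc_of_isolated {S : Set V} {u : V} (hu : u ∈ S) (h : ∀ x ∈ S, ¬ G.Adj u x) :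
    Acyc G S := by
  intro ψ hψ h0
  refine ⟨cre u ψ, cre_mem hu (chains_mono (fun x hx => by exact ⟨hx, h x hx⟩) hψ), ?_⟩
  have := bd_cre u ψ
  rwa [h0, map_zero, add_zero] at this

lemma atMostOne_empty {S : Set V} (hS : ∀ x, x ∉ S) : AtMostOne G S := by
  have key : ∀ ψ ∈ chains G S, ∀ I, I ≠ ∅ → ψ I = 0 := by
    intro ψ hψ I hI
    by_contra h
    obtain ⟨x, hx⟩ := Finset.nonempty_iff_ne_empty.2 hI
    exact hS x ((hψ I h).2 x hx)
  intro ψ hψ φ hφ _ _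
  by_cases h : ψ ∅ = 0
  · refine ⟨1, 0, by simp, 0, Submodule.zero_mem _, ?_⟩
    ext I
    by_cases hI : I = ∅
    · simp [hI, h]
    · simp [key ψ hψ I hI]
  · refine ⟨φ ∅, - ψ ∅, by simp [h], 0, Submodule.zero_mem _, ?_⟩
    ext I
    by_cases hI : I = ∅
    · simp [hI]; ring
    · simp [key ψ hψ I hI, key φ hφ I hI]

/-- If `a_v ψ` is a boundary, then `ψ` is homologous to a chain avoiding `v`. -/
lemma push_off {S : Set V} {v : V} (hv : v ∈ S) {ψ χ : Finset V → ℂ} (hψ : ψ ∈ chains G S)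
    (hχ : χ ∈ chains G (rest G S v)) (e : bd χ = ann v ψ) :
    cre v χ ∈ chains G S ∧ ψ + bd (cre v χ) ∈ chains G {x | x ∈ S ∧ x ≠ v} := by
  refine ⟨cre_mem hv (chains_mono (fun x hx => by exact ⟨hx.1, hx.2.2⟩) hχ), ?_⟩
  have h1 := bd_cre v χ
  have h2 := car_self v ψ
  have : ψ + bd (cre v χ) = ann v (cre v ψ) + χ := by
    rw [e] at h1
    rw [eq_sub_of_add_eq h1]
    nth_rewrite 1 [← h2]
    abel
  rw [this]
  exact Submodule.add_mem _ (ann_cre_mem hψ) (chains_mono (fun x hx => by exact ⟨hx.1, hx.2.1⟩) hχ)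

lemma bd_ann_zero {v : V} {ψ : Finset V → ℂ} (h : bd ψ = 0) : bd (ann v ψ) = 0 := by
  have := bd_ann v ψ
  rwa [h, map_zero, add_zero] at this

lemma atMostOne_delete {S : Set V} {v : V} (hv : v ∈ S) (h0 : Acyc G (rest G S v))
    (h1 : AtMostOne G {x | x ∈ S ∧ x ≠ v}) : AtMostOne G S := by
  intro ψ hψ φ hφ b1 b2
  obtain ⟨χ, hχ, eχ⟩ := h0 _ (ann_mem hψ v) (bd_ann_zero b1)
  obtain ⟨θ, hθ, eθ⟩ := h0 _ (ann_mem hφ v) (bd_ann_zero b2)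
  obtain ⟨m1, m2⟩ := push_off hv hψ hχ eχ
  obtain ⟨n1, n2⟩ := push_off hv hφ hθ eθ
  obtain ⟨c, d, hcd, ξ, hξ, e⟩ := h1 _ m2 _ n2 (by rw [map_add, bd_bd, b1, add_zero])
    (by rw [map_add, bd_bd, b2, add_zero])
  refine ⟨c, d, hcd, ξ - c • cre v χ - d • cre v θ, ?_, ?_⟩
  · exact Submodule.sub_mem _ (Submodule.sub_mem _ (chains_mono (fun x hx => hx.1) hξ)
      (Submodule.smul_mem _ _ m1)) (Submodule.smul_mem _ _ n1)
  · rw [map_sub, map_sub, map_smul, map_smul, e, smul_add, smul_add]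
    abel

lemma atMostOne_link {S : Set V} {v : V} (hv : v ∈ S) (h0 : Acyc G {x | x ∈ S ∧ x ≠ v})
    (h1 : AtMostOne G (rest G S v)) : AtMostOne G S := by
  intro ψ hψ φ hφ b1 b2
  obtain ⟨c, d, hcd, χ, hχ, e⟩ := h1 _ (ann_mem hψ v) _ (ann_mem hφ v) (bd_ann_zero b1)
    (bd_ann_zero b2)
  have hm : c • ψ + d • φ ∈ chains G S :=
    Submodule.add_mem _ (Submodule.smul_mem _ _ hψ) (Submodule.smul_mem _ _ hφ)
  obtain ⟨m1, m2⟩ := push_off hv hm hχ (by rw [e, map_add, map_smul, map_smul])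
  obtain ⟨θ, hθ, eθ⟩ := h0 _ m2 (by
    rw [map_add, bd_bd, map_add, map_smul, map_smul, b1, b2]; simp)
  refine ⟨c, d, hcd, θ - cre v χ, Submodule.sub_mem _ (chains_mono (fun x hx => hx.1) hθ) m1, ?_⟩
  rw [map_sub, eθ]; abel

/-- Fold lemma. -/
lemma atMostOne_fold {S : Set V} {u v : V} (hu : u ∈ S) (hv : v ∈ S) (huv : u ≠ v)
    (hN : ∀ x ∈ S, G.Adj u x → G.Adj v x)
    (h1 : AtMostOne G {x | x ∈ S ∧ x ≠ v}) : AtMostOne G S := by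
  refine atMostOne_delete hv (acyc_of_isolated (S := rest G S v) (u := u) ⟨hu, huv, ?_⟩ ?_) h1
  · intro h; exact G.irrefl (hN v hv h.symm)
  · intro x hx h; exact hx.2.2 (hN x hx.1 h)

lemma atMostOne_fold_many {S : Set V} (T : Finset V) (hT : ∀ v ∈ T, v ∈ S ∧ ∃ u ∈ S, u ∉ T ∧
    ∀ x ∈ S, G.Adj u x → G.Adj v x)
    (h1 : AtMostOne G {x | x ∈ S ∧ x ∉ T}) : AtMostOne G S := by
  induction T using Finset.induction_on generalizing S with
  | empty => simpa using h1
  | insert v T hvT ih =>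
    obtain ⟨hv, u, hu, huT, hN⟩ := hT v (Finset.mem_insert_self _ _)
    have huv : u ≠ v := by rintro rfl; exact huT (Finset.mem_insert_self _ _)
    refine atMostOne_fold hu hv huv hN (ih ?_ ?_)
    · intro w hw
      obtain ⟨hwS, y, hy, hyT, hyN⟩ := hT w (Finset.mem_insert_of_mem hw)
      refine ⟨⟨hwS, fun e => hvT (e ▸ hw)⟩, y, ⟨hy, ?_⟩, fun h => hyT (Finset.mem_insert_of_mem h),
        fun x hx => hyN x hx.1⟩
      rintro rfl; exact hyT (Finset.mem_insert_self _ _)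
    · convert h1 using 1
      ext x
      simp only [Set.mem_ofPred_eq, Finset.mem_insert]
      tauto

lemma atMostOne_leaf {S : Set V} {u v : V} (hu : u ∈ S) (hv : v ∈ S) (huv : u ≠ v)
    (hN : ∀ x ∈ S, G.Adj u x → x = v) (h1 : AtMostOne G (rest G S v)) : AtMostOne G S :=
  atMostOne_link hv (acyc_of_isolated (S := {x | x ∈ S ∧ x ≠ v}) (u := u) ⟨hu, huv⟩ fun x hx h => hx.2 (hN x hx.1 h)) h1

/-! ### Relation with the Hamiltonian -/

/-- Package an independent set. -/
def mkI (I : Finset V) (h : Indep G I) : IndepSet G := ⟨I, h⟩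

/-- The underlying set. -/
def setI (J : IndepSet G) : Finset V := J.1

lemma setI_mkI (I : Finset V) (h : Indep G I) : setI (mkI I h) = I := rfl

lemma setI_indep (J : IndepSet G) : Indep G (setI J) := J.2

lemma setI_inj {J K : IndepSet G} (h : setI J = setI K) : J = K := Subtype.ext h

lemma supercharge_apply (ψ : FockSpace G) (J : IndepSet G) :
    supercharge G ψ J = ∑ v ∈ setI J, fsign ((setI J).erase v) v *
      ψ (mkI ((setI J).erase v) ((setI_indep J).mono (Finset.erase_subset v _))) := rfl

open Classical in
noncomputable def ext0 (G : SimpleGraph V) : FockSpace G →ₗ[ℂ] (Finset V → ℂ) where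
  toFun ψ := fun I => if h : Indep G I then ψ (mkI I h) else 0
  map_add' ψ φ := by ext I; by_cases h : Indep G I <;> simp [h]
  map_smul' c ψ := by ext I; by_cases h : Indep G I <;> simp [h]

lemma ext0_pos (ψ : FockSpace G) {I : Finset V} (h : Indep G I) : ext0 G ψ I = ψ (mkI I h) := by
  simp [ext0, h]

lemma ext0_neg (ψ : FockSpace G) {I : Finset V} (h : ¬ Indep G I) : ext0 G ψ I = 0 := by
  simp [ext0, h]

lemma ext0_mem (ψ : FockSpace G) : ext0 G ψ ∈ chains G Set.univ := by
  intro I hI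
  refine ⟨?_, fun _ _ => trivial⟩
  by_contra h
  exact hI (ext0_neg ψ h)

lemma ext0_surj {χ : Finset V → ℂ} (h : χ ∈ chains G Set.univ) : ∃ ψ, ext0 G ψ = χ := by
  refine ⟨WithLp.toLp 2 fun I => χ (setI I), ?_⟩
  ext I
  by_cases hI : Indep G I
  · rw [ext0_pos _ hI]; rfl
  · rw [ext0_neg _ hI]
    by_contra h0
    exact hI (h I (Ne.symm h0)).1

lemma ext0_inj {ψ φ : FockSpace G} (h : ext0 G ψ = ext0 G φ) : ψ = φ := by
  ext I
  have := congrFun h (setI I)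
  rwa [ext0_pos _ (setI_indep I), ext0_pos _ (setI_indep I)] at this

lemma star_fsign (I : Finset V) (v : V) : (starRingEnd ℂ) (fsign I v) = fsign I v := by
  simp [fsign]

lemma ext0_adjoint (ψ : FockSpace G) :
    ext0 G (LinearMap.adjoint (supercharge G) ψ) = bd (ext0 G ψ) := by
  ext I
  by_cases hI : Indep G I
  swap
  · rw [ext0_neg _ hI]
    by_contra h0
    exact hI (bd_mem (ext0_mem ψ) I (Ne.symm h0)).1
  rw [ext0_pos _ hI]
  have h1 : (LinearMap.adjoint (supercharge G) ψ) (mkI I hI) =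
      inner ℂ (supercharge G (EuclideanSpace.single (mkI I hI) 1)) ψ := by
    rw [← LinearMap.adjoint_inner_right, EuclideanSpace.inner_single_left]
    simp
  rw [h1, PiLp.inner_apply]
  have h2 : ∀ J : IndepSet G, inner ℂ (supercharge G (EuclideanSpace.single (mkI I hI) 1) J) (ψ J) =
      ∑ v, if v ∈ (setI J) ∧ (setI J).erase v = I then fsign I v * ψ J else 0 := by
    intro J
    have : supercharge G (EuclideanSpace.single (mkI I hI) 1) J =
        ∑ v ∈ (setI J), if (setI J).erase v = I then fsign I v else 0 := by
      rw [supercharge_apply]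
      refine Finset.sum_congr rfl fun v _ => ?_
      by_cases h : (setI J).erase v = I
      · subst h
        simp
      · rw [if_neg h]
        have : mkI ((setI J).erase v) ((setI_indep J).mono (Finset.erase_subset v _)) ≠ mkI I hI :=
          fun e => h (congrArg setI e)
        simp [this]
    rw [this]
    simp only [RCLike.inner_apply, map_sum]
    rw [Finset.mul_sum, ← Finset.sum_subset (Finset.subset_univ (setI J))]
    · refine Finset.sum_congr rfl fun v hv => ?_
      by_cases h : (setI J).erase v = I
      · simp [h, hv, star_fsign, mul_comm]
      · simp [h]
    · intro v _ hv
      simp [hv]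
  rw [Finset.sum_congr rfl fun J _ => h2 J, Finset.sum_comm, bd_apply, Finset.sum_apply]
  refine Finset.sum_congr rfl fun v _ => ?_
  rw [ann_apply]
  by_cases hv : v ∈ I
  · rw [if_pos hv]
    refine Finset.sum_eq_zero fun J _ => if_neg ?_
    rintro ⟨_, h⟩
    rw [← h] at hv
    exact Finset.notMem_erase _ _ hv
  rw [if_neg hv]
  have key : ∀ J : IndepSet G, (v ∈ (setI J) ∧ (setI J).erase v = I) → (setI J) = insert v I := by
    rintro J ⟨h, e⟩
    rw [← e]; exact (Finset.insert_erase h).symm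
  by_cases hi : Indep G (insert v I)
  · rw [ext0_pos _ hi, Finset.sum_eq_single (mkI (insert v I) hi)]
    · rw [if_pos]
      exact ⟨Finset.mem_insert_self _ _, Finset.erase_insert hv⟩
    · intro J _ hJ
      exact if_neg fun h => hJ (setI_inj (key J h))
    · simp
  · rw [ext0_neg _ hi, mul_zero]
    refine Finset.sum_eq_zero fun J _ => if_neg fun h => hi ?_
    rw [← key J h]; exact (setI_indep J)

lemma ker_ham {ψ : FockSpace G} (h : hamiltonian G ψ = 0) :
    supercharge G ψ = 0 ∧ LinearMap.adjoint (supercharge G) ψ = 0 := by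
  have h1 : inner ℂ (hamiltonian G ψ) ψ = 0 := by rw [h, inner_zero_left]
  simp only [hamiltonian, LinearMap.add_apply, LinearMap.comp_apply, inner_add_left] at h1
  rw [LinearMap.adjoint_inner_left, ← LinearMap.adjoint_inner_right (supercharge G)
      (LinearMap.adjoint (supercharge G) ψ) ψ,
    inner_self_eq_norm_sq_to_K, inner_self_eq_norm_sq_to_K] at h1
  have h2 : ‖LinearMap.adjoint (supercharge G) ψ‖ ^ 2 + ‖supercharge G ψ‖ ^ 2 = 0 := by
    have h3 := congrArg Complex.re h1
    simpa [← Complex.ofReal_pow] using h3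
  constructor
  · rw [← norm_eq_zero]; nlinarith [sq_nonneg ‖LinearMap.adjoint (supercharge G) ψ‖,
      sq_nonneg ‖supercharge G ψ‖]
  · rw [← norm_eq_zero]; nlinarith [sq_nonneg ‖LinearMap.adjoint (supercharge G) ψ‖,
      sq_nonneg ‖supercharge G ψ‖]

lemma finrank_le_one_of_atMostOne (h : AtMostOne G Set.univ) :
    Module.finrank ℂ ↥(LinearMap.ker (hamiltonian G)) ≤ 1 := by
  by_contra hlt
  push Not at hlt
  obtain ⟨f, hf⟩ := exists_linearIndependent_of_le_finrank (R := ℂ)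
    (M := ↥(LinearMap.ker (hamiltonian G))) (n := 2) hlt
  have hp := LinearIndependent.pair_iff.1 (show LinearIndependent ℂ ![f 0, f 1] by
    convert hf using 1
    ext i; fin_cases i <;> rfl)
  have k0 := ker_ham (LinearMap.mem_ker.1 (f 0).2)
  have k1 := ker_ham (LinearMap.mem_ker.1 (f 1).2)
  obtain ⟨c, d, hcd, χ, hχ, e⟩ := h _ (ext0_mem (f 0).1) _ (ext0_mem (f 1).1)
    (by rw [← ext0_adjoint, k0.2, map_zero]) (by rw [← ext0_adjoint, k1.2, map_zero])
  obtain ⟨θ, rfl⟩ := ext0_surj hχ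
  rw [← ext0_adjoint, ← map_smul, ← map_smul, ← map_add] at e
  have e' := ext0_inj e
  have hz : c • (f 0).1 + d • (f 1).1 = 0 := by
    rw [← inner_self_eq_zero (𝕜 := ℂ)]
    nth_rewrite 2 [← e']
    rw [LinearMap.adjoint_inner_right, map_add, map_smul, map_smul, k0.1, k1.1]
    simp
  have := hp c d (Subtype.ext hz)
  rcases hcd with h | h
  · exact h this.1
  · exact h this.2

end HCF

/-! ### The diamond -/

lemma diamond_adj {a b : ℕ} (p q : DiamondRegion a b) : (diamondGraph a b).Adj p q ↔
    ((p.1.1 + p.1.2) - (q.1.1 + q.1.2) = 1 ∨ (p.1.1 + p.1.2) - (q.1.1 + q.1.2) = -1) ∧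
    ((p.1.1 - p.1.2) - (q.1.1 - q.1.2) = 1 ∨ (p.1.1 - p.1.2) - (q.1.1 - q.1.2) = -1) := by
  change (p.1.1 - q.1.1) ^ 2 + (p.1.2 - q.1.2) ^ 2 = 1 ↔ _
  have hs : (p.1.1 + p.1.2) - (q.1.1 + q.1.2) = (p.1.1 - q.1.1) + (p.1.2 - q.1.2) := by ring
  have ht : (p.1.1 - p.1.2) - (q.1.1 - q.1.2) = (p.1.1 - q.1.1) - (p.1.2 - q.1.2) := by ring
  rw [hs, ht]
  generalize p.1.1 - q.1.1 = x
  generalize p.1.2 - q.1.2 = y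
  constructor
  · intro h
    have h1 : x ≤ 1 := by nlinarith
    have h2 : -1 ≤ x := by nlinarith
    have h3 : y ≤ 1 := by nlinarith
    have h4 : -1 ≤ y := by nlinarith
    interval_cases x <;> interval_cases y <;> simp_all
  · intro h
    have : (x = 0 ∧ y = 1) ∨ (x = 0 ∧ y = -1) ∨ (x = 1 ∧ y = 0) ∨ (x = -1 ∧ y = 0) := by omega
    rcases this with ⟨rfl, rfl⟩ | ⟨rfl, rfl⟩ | ⟨rfl, rfl⟩ | ⟨rfl, rfl⟩ <;> norm_num

/-- The point of the diamond with given diagonal coordinates. -/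
lemma diamond_exists {a b : ℕ} (s t : ℕ) (hs : s < a) (ht : t < b) (h : s % 2 = t % 2) :
    ∃ p : DiamondRegion a b, p.1.1 + p.1.2 = s ∧ p.1.1 - p.1.2 = t := by
  refine ⟨⟨(((s : ℤ) + t) / 2, ((s : ℤ) - t) / 2), ?_⟩, ?_⟩
  · dsimp only; omega
  · dsimp only; omega

section

variable {a b : ℕ} [Fintype (DiamondRegion a b)] [LinearOrder (DiamondRegion a b)]

/-- Process the path in rows `s`, `s + 1`. -/
lemma diamond_path (s : ℕ) (hs : s < a)
    (ih : AtMostOne (diamondGraph a b) {p | (s : ℤ) + 3 ≤ p.1.1 + p.1.2}) (n t : ℕ)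
    (hn : b ≤ t + n) :
    AtMostOne (diamondGraph a b) {p | (s : ℤ) + 3 ≤ p.1.1 + p.1.2 ∨
      ((s : ℤ) ≤ p.1.1 + p.1.2 ∧ p.1.1 + p.1.2 ≤ s + 1 ∧ (t : ℤ) ≤ p.1.1 - p.1.2)} := by
  induction n using Nat.strong_induction_on generalizing t with
  | _ n ihn =>
  by_cases htb : b ≤ t
  · convert ih using 1
    ext p
    have := p.2
    simp only [Set.mem_ofPred_eq]
    omega
  push Not at htb
  by_cases has : a = s + 1
  · by_cases hne : ∃ p : DiamondRegion a b, p ∈ {p : DiamondRegion a b |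
      (s : ℤ) + 3 ≤ p.1.1 + p.1.2 ∨
      ((s : ℤ) ≤ p.1.1 + p.1.2 ∧ p.1.1 + p.1.2 ≤ s + 1 ∧ (t : ℤ) ≤ p.1.1 - p.1.2)}
    · obtain ⟨p, hp⟩ := hne
      refine (acyc_of_isolated hp ?_).atMostOne
      intro x hx h
      rw [diamond_adj] at h
      have := p.2
      have := x.2
      simp only [Set.mem_ofPred_eq] at hp hx
      omega
    · push Not at hne
      exact atMostOne_empty hne
  obtain ⟨p, hp1, hp2, hp3⟩ : ∃ p : DiamondRegion a b, (s : ℤ) ≤ p.1.1 + p.1.2 ∧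
      p.1.1 + p.1.2 ≤ s + 1 ∧ p.1.1 - p.1.2 = t := by
    by_cases hpar : s % 2 = t % 2
    · obtain ⟨p, h1, h2⟩ := diamond_exists (a := a) (b := b) s t hs htb hpar
      exact ⟨p, by omega, by omega, h2⟩
    · obtain ⟨p, h1, h2⟩ := diamond_exists (a := a) (b := b) (s + 1) t (by omega) htb (by omega)
      exact ⟨p, by omega, by omega, h2⟩
  have hpS : p ∈ {p : DiamondRegion a b | (s : ℤ) + 3 ≤ p.1.1 + p.1.2 ∨
      ((s : ℤ) ≤ p.1.1 + p.1.2 ∧ p.1.1 + p.1.2 ≤ s + 1 ∧ (t : ℤ) ≤ p.1.1 - p.1.2)} := by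
    simp only [Set.mem_ofPred_eq]; omega
  by_cases hb1 : b = t + 1
  · refine (acyc_of_isolated hpS ?_).atMostOne
    intro x hx h
    rw [diamond_adj] at h
    have := p.2
    have := x.2
    simp only [Set.mem_ofPred_eq] at hx
    omega
  obtain ⟨q, hq1, hq2, hq3⟩ : ∃ p : DiamondRegion a b, (s : ℤ) ≤ p.1.1 + p.1.2 ∧
      p.1.1 + p.1.2 ≤ s + 1 ∧ p.1.1 - p.1.2 = t + 1 := by
    by_cases hpar : s % 2 = (t + 1) % 2
    · obtain ⟨p, h1, h2⟩ := diamond_exists (a := a) (b := b) s (t + 1) hs (by omega) hpar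
      exact ⟨p, by omega, by omega, by omega⟩
    · obtain ⟨p, h1, h2⟩ := diamond_exists (a := a) (b := b) (s + 1) (t + 1) (by omega) (by omega)
        (by omega)
      exact ⟨p, by omega, by omega, by omega⟩
  refine atMostOne_leaf (u := p) (v := q) hpS ?_ ?_ ?_ ?_
  · simp only [Set.mem_ofPred_eq]; omega
  · rintro rfl; omega
  · intro x hx h
    rw [diamond_adj] at h
    simp only [Set.mem_ofPred_eq] at hx
    apply Subtype.ext
    apply Prod.ext <;> omega
  · have h3 := ihn (n - 3) (by omega) (t + 3) (by omega)
    convert h3 using 1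
    ext x
    simp only [rest, Set.mem_ofPred_eq, diamond_adj]
    have hx : x ≠ q ↔ ¬ (x.1.1 = q.1.1 ∧ x.1.2 = q.1.2) := by
      rw [Ne, Subtype.ext_iff, Prod.ext_iff]
    rw [hx]
    push_cast
    have := x.2
    omega

lemma diamond_rows (n s : ℕ) (hn : a ≤ s + n) :
    AtMostOne (diamondGraph a b) {p | (s : ℤ) ≤ p.1.1 + p.1.2} := by
  induction n using Nat.strong_induction_on generalizing s with
  | _ n ihn =>
  by_cases hs : a ≤ s
  · apply atMostOne_empty
    intro p hp
    have := p.2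
    simp only [Set.mem_ofPred_eq] at hp
    omega
  push Not at hs
  classical
  refine atMostOne_fold_many
    (Finset.univ.filter fun p : DiamondRegion a b => p.1.1 + p.1.2 = (s : ℤ) + 2) ?_ ?_
  · intro v hv
    simp only [Finset.mem_filter, Finset.mem_univ, true_and] at hv
    have hv2 := v.2
    refine ⟨by simp only [Set.mem_ofPred_eq]; omega,
      ⟨(v.1.1 - 1, v.1.2 - 1), by dsimp only; omega⟩, ?_, ?_, ?_⟩
    · simp only [Set.mem_ofPred_eq]; omega
    · simp only [Finset.mem_filter, Finset.mem_univ, true_and]; omega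
    · intro x hx h
      rw [diamond_adj] at h ⊢
      simp only [Set.mem_ofPred_eq] at hx
      dsimp only at h
      omega
  · have h3 := ihn (n - 3) (by omega) (s + 3) (by omega)
    push_cast at h3
    convert diamond_path s hs h3 b 0 (by omega) using 1
    ext p
    have := p.2
    simp only [Set.mem_ofPred_eq, Finset.mem_filter, Finset.mem_univ, true_and]
    push_cast
    omega

end

/-- For the square lattice with free boundary conditions in both diagonal
directions, the zero-energy ground state is at most unique: `dim ker H ≤ 1`. -/
theorem diamond_ground_state_at_most_unique (a b : ℕ) (ha : 1 ≤ a) (hb : 1 ≤ b)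
    [Fintype (DiamondRegion a b)] [LinearOrder (DiamondRegion a b)] :
    Module.finrank ℂ ↥(LinearMap.ker (hamiltonian (diamondGraph a b))) ≤ 1 := by
  apply finrank_le_one_of_atMostOne
  convert diamond_rows (a := a) (b := b) a 0 (by omega) using 1
  ext p
  have := p.2
  simp only [Set.mem_univ, Set.mem_ofPred_eq, true_iff]
  push_cast
  omega
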